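/- arXiv:2008.12179 — 6 statements merged into one kernel-verified Lean document; each statement's English description precedes it below -/
import Mathlib

section
/- Let n, m ≥ 1, let f ∈ ℝⁿ, let g be a real n×m matrix, let G be a symmetric positive-definite real m×m matrix, let k ∈ ℝᵐ, let p, w ∈ ℝⁿ with gᵀw ≠ 0, and let a ∈ ℝ. Set z = ⟨w, f + g k⟩ + a and ū = k − (z/(wᵀ g G⁻¹ gᵀ w)) G⁻¹ gᵀ w. Then: (i) ⟨w, f + g ū⟩ = −a (the barrier constraint is rendered active); (ii) ⟨p, f + g ū⟩ = ⟨p, f + g k⟩ − (z/(wᵀ g G⁻¹ gᵀ w)) · (pᵀ g G⁻¹ gᵀ w); and (iii) if in addition ⟨p, f + g k⟩ ≤ 0, z < 0, and pᵀ g G⁻¹ gᵀ w < 0, then ⟨p, f + g ū⟩ < 0. -/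
open Matrix

/-- the active branch `ū` of the safe controller renders the
barrier constraint active and yields the Lyapunov-derivative identity (9). -/
theorem stmt_5 (n m : ℕ) (hn : 1 ≤ n) (hm : 1 ≤ m)
    (f : Fin n → ℝ) (g : Matrix (Fin n) (Fin m) ℝ)
    (G : Matrix (Fin m) (Fin m) ℝ)
    (hGsymm : Gᵀ = G)
    (hGpos : ∀ u : Fin m → ℝ, u ≠ 0 → 0 < u ⬝ᵥ G *ᵥ u)
    (k : Fin m → ℝ) (p w : Fin n → ℝ) (hgw : gᵀ *ᵥ w ≠ 0) (a : ℝ) :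
    let z := w ⬝ᵥ (f + g *ᵥ k) + a
    let d := (gᵀ *ᵥ w) ⬝ᵥ G⁻¹ *ᵥ (gᵀ *ᵥ w)
    let ubar := k - (z / d) • (G⁻¹ *ᵥ (gᵀ *ᵥ w))
    (w ⬝ᵥ (f + g *ᵥ ubar) = -a) ∧
    (p ⬝ᵥ (f + g *ᵥ ubar) =
      p ⬝ᵥ (f + g *ᵥ k) - (z / d) * (p ⬝ᵥ (g *ᵥ (G⁻¹ *ᵥ (gᵀ *ᵥ w))))) ∧
    (p ⬝ᵥ (f + g *ᵥ k) ≤ 0 → z < 0 → p ⬝ᵥ (g *ᵥ (G⁻¹ *ᵥ (gᵀ *ᵥ w))) < 0 →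
      p ⬝ᵥ (f + g *ᵥ ubar) < 0) := by
  intro z d ubar
  have hpd : G.PosDef := by
    refine Matrix.PosDef.of_dotProduct_mulVec_pos ?_ ?_
    · simpa [Matrix.IsHermitian, Matrix.conjTranspose_eq_transpose_of_trivial] using hGsymm
    · intro x hx
      simpa using hGpos x hx
  have hd : 0 < d := by
    have h := hpd.inv.dotProduct_mulVec_pos hgw
    simpa [d] using h
  have key : ∀ q : Fin n → ℝ, q ⬝ᵥ (f + g *ᵥ ubar) =
      q ⬝ᵥ (f + g *ᵥ k) - (z / d) * (q ⬝ᵥ (g *ᵥ (G⁻¹ *ᵥ (gᵀ *ᵥ w)))) := by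
    intro q
    simp only [ubar, Matrix.mulVec_sub, Matrix.mulVec_smul, dotProduct_add, dotProduct_sub,
      dotProduct_smul, smul_eq_mul]
    ring
  have hw : w ⬝ᵥ (g *ᵥ (G⁻¹ *ᵥ (gᵀ *ᵥ w))) = d := by
    rw [Matrix.dotProduct_mulVec, ← Matrix.mulVec_transpose]
  refine ⟨?_, key p, ?_⟩
  · rw [key w, hw, div_mul_cancel₀ _ hd.ne']
    simp only [z]
    ring
  · intro h1 h2 h3
    rw [key p]
    have := mul_pos_of_neg_of_neg (div_neg_of_neg_of_pos h2 hd) h3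
    linarith
end

section
/- Let n, m ≥ 1, let f ∈ ℝⁿ, let g be a real n×m matrix, let G be a symmetric positive-definite real m×m matrix, let k ∈ ℝᵐ, let p, w ∈ ℝⁿ, and let a ∈ ℝ. Set z = ⟨w, f + g k⟩ + a, and define u* = k if z ≥ 0, and u* = k − (z/(wᵀ g G⁻¹ gᵀ w)) G⁻¹ gᵀ w if z < 0 (assuming gᵀw ≠ 0 whenever z < 0). If ⟨p, f + g k⟩ ≤ 0 and either z ≥ 0 or pᵀ g G⁻¹ gᵀ w < 0, then ⟨p, f + g u*⟩ ≤ 0. -/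
open Matrix

/-- pointwise case analysis showing the Lyapunov function is
nonincreasing under the closed-form QP controller (7). -/
theorem stmt_6 (n m : ℕ) (hn : 1 ≤ n) (hm : 1 ≤ m)
    (f : Fin n → ℝ) (g : Matrix (Fin n) (Fin m) ℝ)
    (G : Matrix (Fin m) (Fin m) ℝ)
    (hGsymm : Gᵀ = G)
    (hGpos : ∀ u : Fin m → ℝ, u ≠ 0 → 0 < u ⬝ᵥ G *ᵥ u)
    (k : Fin m → ℝ) (p w : Fin n → ℝ) (a : ℝ) :
    let z := w ⬝ᵥ (f + g *ᵥ k) + a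
    let d := (gᵀ *ᵥ w) ⬝ᵥ G⁻¹ *ᵥ (gᵀ *ᵥ w)
    let ustar := if 0 ≤ z then k else k - (z / d) • (G⁻¹ *ᵥ (gᵀ *ᵥ w))
    (z < 0 → gᵀ *ᵥ w ≠ 0) →
    p ⬝ᵥ (f + g *ᵥ k) ≤ 0 →
    (0 ≤ z ∨ p ⬝ᵥ (g *ᵥ (G⁻¹ *ᵥ (gᵀ *ᵥ w))) < 0) →
    p ⬝ᵥ (f + g *ᵥ ustar) ≤ 0 := by
  intro z d ustar _ hp hor
  by_cases hz : 0 ≤ z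
  · have hu : ustar = k := if_pos hz
    rw [hu]; exact hp
  · have hu : ustar = k - (z / d) • (G⁻¹ *ᵥ (gᵀ *ᵥ w)) := if_neg hz
    have hq := hor.resolve_left hz
    have hG : G.PosDef := by
      refine Matrix.PosDef.of_dotProduct_mulVec_pos ?_ ?_
      · simpa [Matrix.IsHermitian, Matrix.conjTranspose_eq_transpose_of_trivial] using hGsymm
      · intro x hx
        simpa using hGpos x hx
    have hd : 0 ≤ d := by
      have := hG.inv.posSemidef.dotProduct_mulVec_nonneg (gᵀ *ᵥ w)
      simpa only [star_trivial] using this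
    have hzd : z / d ≤ 0 := div_nonpos_of_nonpos_of_nonneg (not_le.mp hz).le hd
    have he : p ⬝ᵥ (f + g *ᵥ ustar) = p ⬝ᵥ (f + g *ᵥ k)
        - (z / d) * (p ⬝ᵥ (g *ᵥ (G⁻¹ *ᵥ (gᵀ *ᵥ w)))) := by
      rw [hu, Matrix.mulVec_sub, Matrix.mulVec_smul, ← add_sub_assoc, dotProduct_sub,
        dotProduct_smul, smul_eq_mul]
    rw [he]
    have := mul_nonneg_of_nonpos_of_nonpos hzd hq.le
    linarith
end

section
/- Let α : ℝ → ℝ be an extended class-𝒦 function that is locally Lipschitz, let T ∈ (0, ∞], and let w : ℝ → ℝ be continuous on [0, T) and differentiable on (0, T) with derivative satisfying w′(t) ≥ −α(w(t)) for all t ∈ (0, T). If w(0) ≥ 0, then w(t) ≥ 0 for all t ∈ [0, T). -/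
/-- scalar comparison (Brezis) lemma: if `w' ≥ -α(w)` on `(0,T)`
with `α` a locally Lipschitz extended class-𝒦 function and `w(0) ≥ 0`, then
`w ≥ 0` on `[0,T)`. -/
theorem stmt_7 (α : ℝ → ℝ)
    (hαc : Continuous α) (hαm : StrictMono α) (hα0 : α 0 = 0)
    (hαl : LocallyLipschitz α)
    (T : EReal) (hT : 0 < T)
    (w : ℝ → ℝ)
    (hw : ContinuousOn w {t : ℝ | 0 ≤ t ∧ (t : EReal) < T})
    (hderiv : ∀ t : ℝ, 0 < t → (t : EReal) < T →
      ∃ d : ℝ, HasDerivAt w d t ∧ -α (w t) ≤ d)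
    (h0 : 0 ≤ w 0) :
    ∀ t : ℝ, 0 ≤ t → (t : EReal) < T → 0 ≤ w t := by
  intro t ht htT
  by_contra hneg
  have hlt : w t < 0 := not_le.mp hneg
  have hsub : Set.Icc 0 t ⊆ {t : ℝ | 0 ≤ t ∧ (t : EReal) < T} := fun s hs =>
    ⟨hs.1, lt_of_le_of_lt (EReal.coe_le_coe_iff.mpr hs.2) htT⟩
  obtain ⟨c, hc, hmin⟩ := isCompact_Icc.exists_isMinOn
    (Set.nonempty_Icc.mpr ht) (hw.mono hsub)
  have hct : w c ≤ w t := hmin (Set.right_mem_Icc.mpr ht)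
  have hc0 : 0 < c := by
    rcases hc.1.eq_or_lt with h | h
    · rw [← h] at hct
      linarith
    · exact h
  obtain ⟨d, hd, hda⟩ := hderiv c hc0 (hsub hc).2
  have hα : α (w c) < 0 := by
    rw [← hα0]
    exact hαm (by linarith)
  have hdpos : 0 < d := by linarith
  have hs : ∀ᶠ y in nhdsWithin c (Set.Iio c), 0 < slope w c y :=
    ((hasDerivAt_iff_tendsto_slope.mp hd).mono_left
      (nhdsWithin_mono c (fun y hy => ne_of_lt hy))).eventually (lt_mem_nhds hdpos)
  obtain ⟨y, hy, hyI⟩ := (hs.and (Ioo_mem_nhdsLT hc0)).exists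
  have hwy : w c ≤ w y := hmin ⟨hyI.1.le, hyI.2.le.trans hc.2⟩
  rw [slope_def_field] at hy
  have : (w y - w c) / (y - c) ≤ 0 :=
    div_nonpos_of_nonneg_of_nonpos (by linarith) (by linarith [hyI.2])
  linarith
end

section
/- Let α, φ : ℝ → ℝ be extended class-𝒦 functions that are locally Lipschitz, let T ∈ (0, ∞], and let c : ℝ → ℝ be continuously differentiable on [0, T) such that the function h(t) := c′(t) + φ(c(t)) is continuous on [0, T), differentiable on (0, T), and satisfies h′(t) ≥ −α(h(t)) for all t ∈ (0, T). If h(0) ≥ 0 and c(0) ≥ 0, then h(t) ≥ 0 and c(t) ≥ 0 for all t ∈ [0, T). -/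
theorem barrier_aux (α g : ℝ → ℝ) (hαm : StrictMono α) (hα0 : α 0 = 0) (b : ℝ) (hb : 0 ≤ b)
    (hg : ContinuousOn g (Set.Icc 0 b))
    (hd : ∀ t ∈ Set.Ioo 0 b, ∃ d : ℝ, HasDerivAt g d t ∧ -α (g t) ≤ d)
    (h0 : 0 ≤ g 0) : 0 ≤ g b := by
  by_contra! hneg
  have hcl : IsCompact (Set.Icc 0 b ∩ g ⁻¹' Set.Ici 0) :=
    isCompact_Icc.of_isClosed_subset (hg.preimage_isClosed_of_isClosed isClosed_Icc isClosed_Ici)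
      Set.inter_subset_left
  obtain ⟨s, ⟨⟨hs0, hsb⟩, hgs⟩, hmax⟩ := hcl.exists_isGreatest ⟨0, ⟨le_rfl, hb⟩, h0⟩
  have hgs' : 0 ≤ g s := hgs
  have hlt : s < b := by
    rcases hsb.lt_or_eq with h | h
    · exact h
    · subst h; linarith
  have hsub : ∀ t ∈ Set.Ioo s b, t ∈ Set.Ioo 0 b := fun t ht => ⟨hs0.trans_lt ht.1, ht.2⟩
  obtain ⟨ξ, hξ, he⟩ := exists_deriv_eq_slope g hlt
    (hg.mono (Set.Icc_subset_Icc_left hs0))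
    (fun t ht => by
      obtain ⟨d, hd1, _⟩ := hd t (hsub t ht)
      exact hd1.differentiableAt.differentiableWithinAt)
  obtain ⟨d, hd1, hd2⟩ := hd ξ (hsub ξ hξ)
  have hgξ : g ξ < 0 := by
    by_contra! h
    have : ξ ≤ s := hmax ⟨⟨(hsub ξ hξ).1.le, hξ.2.le⟩, h⟩
    linarith [hξ.1]
  have h1 : α (g ξ) < 0 := hα0 ▸ hαm hgξ
  rw [hd1.deriv] at he
  have h2 : (g b - g s) / (b - s) < 0 := div_neg_of_neg_of_pos (by linarith) (by linarith)
  linarith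

/-- scalar form of the high-order (relative-degree two) CBF
argument: both `h = c' + φ ∘ c` and `c` stay nonnegative on `[0,T)`. -/
theorem stmt_8 (α φ : ℝ → ℝ)
    (hαc : Continuous α) (hαm : StrictMono α) (hα0 : α 0 = 0)
    (hαl : LocallyLipschitz α)
    (hφc : Continuous φ) (hφm : StrictMono φ) (hφ0 : φ 0 = 0)
    (hφl : LocallyLipschitz φ)
    (T : EReal) (hT : 0 < T)
    (c c' : ℝ → ℝ)
    (hc : ∀ t : ℝ, 0 ≤ t → (t : EReal) < T →
      HasDerivWithinAt c (c' t) {s : ℝ | 0 ≤ s ∧ (s : EReal) < T} t)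
    (hc' : ContinuousOn c' {t : ℝ | 0 ≤ t ∧ (t : EReal) < T})
    (hhcont : ContinuousOn (fun t => c' t + φ (c t)) {t : ℝ | 0 ≤ t ∧ (t : EReal) < T})
    (hhderiv : ∀ t : ℝ, 0 < t → (t : EReal) < T →
      ∃ d : ℝ, HasDerivAt (fun s => c' s + φ (c s)) d t ∧ -α (c' t + φ (c t)) ≤ d)
    (hh0 : 0 ≤ c' 0 + φ (c 0)) (hc0 : 0 ≤ c 0) :
    ∀ t : ℝ, 0 ≤ t → (t : EReal) < T → 0 ≤ c' t + φ (c t) ∧ 0 ≤ c t := by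
  have key : ∀ b : ℝ, (b : EReal) < T → ∀ t ≤ b, (t : EReal) < T := fun b hb t ht =>
    lt_of_le_of_lt (EReal.coe_le_coe_iff.2 ht) hb
  have H : ∀ t : ℝ, 0 ≤ t → (t : EReal) < T → 0 ≤ c' t + φ (c t) := fun b hb hbT =>
    barrier_aux α (fun t => c' t + φ (c t)) hαm hα0 b hb
      (hhcont.mono fun t ht => ⟨ht.1, key b hbT t ht.2⟩)
      (fun t ht => hhderiv t ht.1 (key b hbT t ht.2.le)) hh0
  intro b hb hbT
  refine ⟨H b hb hbT, barrier_aux φ c hφm hφ0 b hb ?_ ?_ hc0⟩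
  · intro t ht
    exact (hc t ht.1 (key b hbT t ht.2)).continuousWithinAt.mono
      fun t ht => ⟨ht.1, key b hbT t ht.2⟩
  · intro t ht
    have htT := key b hbT t ht.2.le
    refine ⟨c' t, (hc t ht.1.le htT).hasDerivAt ?_, by linarith [H t ht.1.le htT]⟩
    exact Filter.mem_of_superset (Ioo_mem_nhds ht.1 ht.2)
      fun s hs => ⟨hs.1.le, key b hbT s hs.2.le⟩
end

section
/- Let n ≥ 1, let M, N, C, K_p, K_d be real n×n matrices with M symmetric positive definite, K_p symmetric, and suppose vᵀ((1/2)N − C)v = 0 for the given vector v ∈ ℝⁿ. Let q, τ_g, w ∈ ℝⁿ with w ≠ 0, let z ∈ ℝ and ρ > 0. Define k = τ_g − K_p q − K_d v, ū = k − (z/(wᵀ M⁻¹ w)) w, and u* = ū + (ρ² z (wᵀ v)/(wᵀ M⁻¹ w)) v. Then (1/2) vᵀ N v + vᵀ(−C v − τ_g + u*) + qᵀ K_p v = −vᵀ K_d v − (z (wᵀ v)/(wᵀ M⁻¹ w)) (1 − ρ² ‖v‖²). Consequently, if z < 0, wᵀ v > 0, and ‖v‖ ≥ 1/ρ, then (1/2)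 vᵀ N v + vᵀ(−C v − τ_g + u*) + qᵀ K_p v ≤ −vᵀ K_d v. -/
open Matrix

/-- Lyapunov-derivative computation for the augmented safe
controller (16), and the resulting inequality when `‖v‖ ≥ 1/ρ`. -/
theorem stmt_12 (n : ℕ) (hn : 1 ≤ n)
    (M N C K_p K_d : Matrix (Fin n) (Fin n) ℝ)
    (hMsymm : Mᵀ = M)
    (hMpos : ∀ u : Fin n → ℝ, u ≠ 0 → 0 < u ⬝ᵥ M *ᵥ u)
    (hKp : K_pᵀ = K_p)
    (v q τ_g w : Fin n → ℝ)
    (hskew : v ⬝ᵥ ((1 / 2 : ℝ) • N - C) *ᵥ v = 0)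
    (hw : w ≠ 0) (z ρ : ℝ) (hρ : 0 < ρ) :
    let k := τ_g - K_p *ᵥ q - K_d *ᵥ v
    let ubar := k - (z / (w ⬝ᵥ M⁻¹ *ᵥ w)) • w
    let ustar := ubar + (ρ ^ 2 * z * (w ⬝ᵥ v) / (w ⬝ᵥ M⁻¹ *ᵥ w)) • v
    ((1 / 2 : ℝ) * (v ⬝ᵥ N *ᵥ v) + v ⬝ᵥ (-(C *ᵥ v) - τ_g + ustar) + q ⬝ᵥ K_p *ᵥ v
      = -(v ⬝ᵥ K_d *ᵥ v) - (z * (w ⬝ᵥ v) / (w ⬝ᵥ M⁻¹ *ᵥ w)) * (1 - ρ ^ 2 * (v ⬝ᵥ v))) ∧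
    (z < 0 → 0 < w ⬝ᵥ v → 1 / ρ ≤ Real.sqrt (v ⬝ᵥ v) →
      (1 / 2 : ℝ) * (v ⬝ᵥ N *ᵥ v) + v ⬝ᵥ (-(C *ᵥ v) - τ_g + ustar) + q ⬝ᵥ K_p *ᵥ v
        ≤ -(v ⬝ᵥ K_d *ᵥ v)) := by
  intro k ubar ustar
  have hM : M.PosDef := by
    refine Matrix.PosDef.of_dotProduct_mulVec_pos ?_ ?_
    · simpa [Matrix.IsHermitian, Matrix.conjTranspose_eq_transpose_of_trivial] using hMsymm
    · intro u hu
      simpa using hMpos u hu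
  have hD : 0 < w ⬝ᵥ M⁻¹ *ᵥ w := by
    have := hM.inv.dotProduct_mulVec_pos hw
    simpa using this
  have hsym : v ⬝ᵥ K_p *ᵥ q = q ⬝ᵥ K_p *ᵥ v := by
    rw [Matrix.dotProduct_mulVec, ← Matrix.mulVec_transpose, hKp, dotProduct_comm]
  have hvw : v ⬝ᵥ w = w ⬝ᵥ v := dotProduct_comm v w
  have hs : (1 / 2 : ℝ) * (v ⬝ᵥ N *ᵥ v) - v ⬝ᵥ C *ᵥ v = 0 := by
    rw [Matrix.sub_mulVec, Matrix.smul_mulVec, dotProduct_sub, dotProduct_smul] at hskew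
    simpa only [smul_eq_mul] using hskew
  have key : (1 / 2 : ℝ) * (v ⬝ᵥ N *ᵥ v) + v ⬝ᵥ (-(C *ᵥ v) - τ_g + ustar) + q ⬝ᵥ K_p *ᵥ v
      = -(v ⬝ᵥ K_d *ᵥ v) - (z * (w ⬝ᵥ v) / (w ⬝ᵥ M⁻¹ *ᵥ w)) * (1 - ρ ^ 2 * (v ⬝ᵥ v)) := by
    simp only [ustar, ubar, k, dotProduct_add, dotProduct_sub, dotProduct_neg, dotProduct_smul,
      smul_eq_mul, hsym, hvw]
    linear_combination hs
  refine ⟨key, fun hz hwv hv => ?_⟩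
  rw [key]
  have h1 : 1 ≤ ρ ^ 2 * (v ⬝ᵥ v) := by
    have h0 : (1 / ρ) ^ 2 ≤ v ⬝ᵥ v := (Real.le_sqrt' (by positivity)).1 hv
    rw [div_pow, one_pow, div_le_iff₀ (by positivity)] at h0
    linarith
  have h2 : z * (w ⬝ᵥ v) / (w ⬝ᵥ M⁻¹ *ᵥ w) ≤ 0 :=
    div_nonpos_of_nonpos_of_nonneg (mul_nonpos_of_nonpos_of_nonneg hz.le hwv.le) hD.le
  have h3 := mul_nonneg_of_nonpos_of_nonpos h2 (sub_nonpos.2 h1)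
  linarith
end

section
/- Let n ≥ 1, let M, C, K_p, K_d, P_v be real n×n matrices with M invertible, K_p symmetric, and P_v symmetric positive semidefinite. Let q, v, τ_g ∈ ℝⁿ with P_v v ≠ 0, and let z ∈ ℝ with z ≤ 0. Define u = C v + τ_g + M(−K_p q − K_d v) + (z/‖P_v v‖²) M P_v v. Then qᵀ K_p v + vᵀ (M⁻¹(−C v − τ_g + u)) = −vᵀ K_d v + z (vᵀ P_v v)/‖P_v v‖² ≤ vᵀ(−K_d v). -/
open Matrix

/-- pointwise passivity computation of Proposition 1 for the
active branch of the safe controller with velocity-type barrier. -/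
theorem stmt_14 (n : ℕ) (hn : 1 ≤ n)
    (M C K_p K_d P_v : Matrix (Fin n) (Fin n) ℝ)
    (hM : IsUnit M) (hKp : K_pᵀ = K_p)
    (hPvsymm : P_vᵀ = P_v)
    (hPvpsd : ∀ u : Fin n → ℝ, 0 ≤ u ⬝ᵥ P_v *ᵥ u)
    (q v τ_g : Fin n → ℝ) (hPvv : P_v *ᵥ v ≠ 0)
    (z : ℝ) (hz : z ≤ 0) :
    let s := (P_v *ᵥ v) ⬝ᵥ (P_v *ᵥ v)
    let u := C *ᵥ v + τ_g + M *ᵥ (-(K_p *ᵥ q) - K_d *ᵥ v) + (z / s) • (M *ᵥ (P_v *ᵥ v))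
    (q ⬝ᵥ K_p *ᵥ v + v ⬝ᵥ (M⁻¹ *ᵥ (-(C *ᵥ v) - τ_g + u))
      = -(v ⬝ᵥ K_d *ᵥ v) + z * (v ⬝ᵥ P_v *ᵥ v) / s) ∧
    (q ⬝ᵥ K_p *ᵥ v + v ⬝ᵥ (M⁻¹ *ᵥ (-(C *ᵥ v) - τ_g + u)) ≤ v ⬝ᵥ (-(K_d *ᵥ v))) := by
  intro s u
  have hs : 0 ≤ s := by
    show 0 ≤ (P_v *ᵥ v) ⬝ᵥ (P_v *ᵥ v)
    exact Finset.sum_nonneg fun i _ => mul_self_nonneg _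
  have hinv : M⁻¹ * M = 1 :=
    Matrix.nonsing_inv_mul M ((Matrix.isUnit_iff_isUnit_det M).mp hM)
  have h1 : -(C *ᵥ v) - τ_g + u
      = M *ᵥ (-(K_p *ᵥ q) - K_d *ᵥ v + (z / s) • (P_v *ᵥ v)) := by
    rw [Matrix.mulVec_add M, Matrix.mulVec_smul]
    simp only [u]
    abel
  have h2 : M⁻¹ *ᵥ (-(C *ᵥ v) - τ_g + u)
      = -(K_p *ᵥ q) - K_d *ᵥ v + (z / s) • (P_v *ᵥ v) := by
    rw [h1, Matrix.mulVec_mulVec, hinv, Matrix.one_mulVec]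
  have h3 : q ⬝ᵥ K_p *ᵥ v = v ⬝ᵥ K_p *ᵥ q := by
    rw [Matrix.dotProduct_mulVec, ← Matrix.mulVec_transpose, hKp, dotProduct_comm]
  have h4 : q ⬝ᵥ K_p *ᵥ v + v ⬝ᵥ (M⁻¹ *ᵥ (-(C *ᵥ v) - τ_g + u))
      = -(v ⬝ᵥ K_d *ᵥ v) + z * (v ⬝ᵥ P_v *ᵥ v) / s := by
    rw [h2, h3, dotProduct_add, dotProduct_sub, dotProduct_neg, dotProduct_smul, smul_eq_mul]
    ring
  refine ⟨h4, ?_⟩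
  rw [h4, dotProduct_neg]
  have h5 : z * (v ⬝ᵥ P_v *ᵥ v) / s ≤ 0 :=
    div_nonpos_of_nonpos_of_nonneg (mul_nonpos_of_nonpos_of_nonneg hz (hPvpsd v)) hs
  linarith
end
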